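/- In the tree block setting, assuming (A1) and (A2), fix i ∈ {1,…,r}, an edge e ∈ ∂̄T_i, and σ ∈ Ω^μ_E, and let C = σ(N(e) ∩ ∂T_i) be the set of colours σ assigns to edges outside T_i incident to e. Then: (1) there is a universal constant C₀ > 0 (independent of d, G, T, μ, the partition, i, e and σ) such that if |∂̄T_i| = 2 then for every colour c ∈ {1,…,k}∖C, the proportion π^σ_{E_i}({ξ ∈ Ω^σ_{E_i} : ξ(e) = c}) satisfies |π^σ_{E_i}({ξ : ξ(e) = c}) − 1/2| ≤ C₀/d; and (2) if ∂̄T_i = {e}, then for any two colours c, c' ∈ {1,…,k}∖C, the number of ξ ∈ Ω^σ_{E_i} with ξ(e) = c equals the number of ξ ∈ Ω^σ_{E_i} with ξ(e) = c', so each available colour has probability exactly 1/(k−|C|) under π^σ_{E_i}. -/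

import Mathlib

/-!
Everything is obtained by exchanging two colours on part of `E`, an injective operation on
colourings, so that only properness of the result has to be checked.

If `e` is the only interior boundary edge, exchanging two available colours on all of `E` shows
that they are equally likely.

Suppose there is a second interior boundary edge `e'`. The fringe and non-incidence conditions
force the exterior edges at `e` to be the `d - 1` other edges at its leaf endpoint, so exactly two
colours `x`, `x'` are available. Let `e, g₁, g₂, …` be the path towards `e'`; both `g₁` and `g₂`
separate `e` from `e'`. Write `N(x)` for the number of colourings `ξ` with `ξ e = x`. If
`ξ g₁ ≠ x'`, exchanging `x` and `x'` on the near side of `g₁` is allowed and does not touch `e'`,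
so `N(x) - N(x, ξ g₁ = x') ≤ N(x')`. For each of the `d - 1` colours `z ≠ x, x'`, exchanging `x'`
and `z` on the near side of `g₂` yields
`N(x, ξ g₁ = x') - N(x, ξ g₁ = x', ξ g₂ = z) ≤ N(x, ξ g₁ = z)`; summing over `z` gives
`(d - 1) N(x, ξ g₁ = x') ≤ N(x)`. Hence `(d - 1) N(x) ≤ N(x) + (d - 1) N(x')`, and by symmetry
each of the two colours has probability within `1/d` of `1/2`.
-/

open Finset
open scoped Classical

section Markov

variable {Ω : Type*} [Fintype Ω]

/-- A generator matrix: nonnegative off-diagonal entries, zero row sums. -/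
def IsGenerator (L : Ω → Ω → ℝ) : Prop :=
  (∀ x y : Ω, x ≠ y → 0 ≤ L x y) ∧ (∀ x : Ω, ∑ y : Ω, L x y = 0)

/-- A transition of a generator matrix. -/
def IsTransition (L : Ω → Ω → ℝ) (x y : Ω) : Prop := x ≠ y ∧ 0 < L x y

/-- Ergodicity: the directed graph of transitions is strongly connected. -/
def IsErgodicGen (L : Ω → Ω → ℝ) : Prop :=
  ∀ x y : Ω, Relation.ReflTransGen (IsTransition L) x y

/-- Reversibility with respect to a distribution π. -/
def IsReversible (L : Ω → Ω → ℝ) (π : Ω → ℝ) : Prop :=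
  ∀ x y : Ω, π x * L x y = π y * L y x

/-- The variance form. -/
noncomputable def VarForm (π : Ω → ℝ) (f : Ω → ℝ) : ℝ :=
  (1 / 2) * ∑ a : Ω, ∑ b : Ω, π a * π b * (f a - f b) ^ 2

/-- The Dirichlet form. -/
noncomputable def DirForm (π : Ω → ℝ) (L : Ω → Ω → ℝ) (f : Ω → ℝ) : ℝ :=
  (1 / 2) * ∑ a : Ω, ∑ b : Ω, π a * L a b * (f a - f b) ^ 2

/-- The spectral gap: infimum (= minimum) of the Rayleigh quotient over nonconstant functions. -/
noncomputable def specGap (π : Ω → ℝ) (L : Ω → Ω → ℝ) : ℝ :=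
  sInf {r : ℝ | ∃ f : Ω → ℝ, (∃ a b : Ω, f a ≠ f b) ∧ r = DirForm π L f / VarForm π f}

/-- The relaxation time, with the convention that it equals 1 on a one-point space. -/
noncomputable def relaxTime (π : Ω → ℝ) (L : Ω → Ω → ℝ) : ℝ :=
  if ∃ a b : Ω, a ≠ b then 1 / specGap π L else 1

/-- The uniform distribution on a finite type. -/
noncomputable def unif (Ω : Type*) [Fintype Ω] : Ω → ℝ := fun _ => 1 / (Fintype.card Ω : ℝ)

end Markov

section Glauber

variable {I : Type*} [Fintype I] {k : ℕ} {S : Type*} [Fintype S] [DecidableEq S]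

/-- Off-diagonal entry of the Glauber dynamics: if the two states differ at exactly one site,
the rate of that site; otherwise `0`. -/
noncomputable def glauberOff (p : I → ℝ) (val : S → I → Fin k) (a b : S) : ℝ :=
  if (Finset.univ.filter fun w => val a w ≠ val b w).card = 1 then
    ∑ w ∈ Finset.univ.filter fun w => val a w ≠ val b w, p w
  else 0

/-- The Glauber dynamics generator with site rates `p`, on a state space `S` of configurations
(described by `val : S → I → Fin k`): off-diagonal entries are the rate of the unique differing
site, diagonal entries make row sums vanish. -/
noncomputable def glauber (p : I → ℝ) (val : S → I → Fin k) : S → S → ℝ :=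
  fun σ η =>
    if σ = η then -∑ η' ∈ Finset.univ.filter fun b => b ≠ σ, glauberOff p val σ η'
    else glauberOff p val σ η

end Glauber

section Trees

variable {V : Type} [Fintype V] [DecidableEq V]

/-- Two edges are incident if they are distinct and share an endpoint. -/
def EdgeInc (e f : Sym2 V) : Prop := e ≠ f ∧ ∃ v : V, v ∈ e ∧ v ∈ f

/-- A proper `k`-edge-colouring of `G` (total map on `Sym2 V`, constrained on edges). -/
def ProperECol (G : SimpleGraph V) {k : ℕ} (σ : Sym2 V → Fin k) : Prop :=
  ∀ e ∈ G.edgeSet, ∀ f ∈ G.edgeSet, EdgeInc e f → σ e ≠ σ f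

/-- `Ω^χ_{E'}`: proper edge-colourings of `G` agreeing with `χ` off `E'`. -/
abbrev OmegaE (G : SimpleGraph V) (k : ℕ) (E' : Finset (Sym2 V)) (χ : Sym2 V → Fin k) :=
  {σ : Sym2 V → Fin k // ProperECol G σ ∧ ∀ e ∉ E', σ e = χ e}

/-- The Glauber dynamics `𝓛^χ_{E'}` for `k`-edge-colourings: each edge is updated at
rate `1/k`. -/
noncomputable def treeGen (G : SimpleGraph V) (k : ℕ) (E' : Finset (Sym2 V))
    (χ : Sym2 V → Fin k) : OmegaE G k E' χ → OmegaE G k E' χ → ℝ :=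
  glauber (fun _ : Sym2 V => 1 / (k : ℝ)) (fun σ => σ.1)

variable (G : SimpleGraph V) [DecidableRel G.Adj]

/-- The exterior boundary `∂T` of the subtree with edge set `ET`. -/
noncomputable def extBd (ET : Finset (Sym2 V)) : Finset (Sym2 V) :=
  (G.edgeFinset \ ET).filter fun e => ∃ f ∈ ET, EdgeInc e f

/-- The interior boundary `∂̄T` of the subtree with edge set `ET`. -/
noncomputable def intBd (ET : Finset (Sym2 V)) : Finset (Sym2 V) :=
  ET.filter fun e => ∃ f ∈ extBd G ET, EdgeInc e f

/-- Degree of a vertex in the subtree with edge set `ET`. -/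
noncomputable def degT (ET : Finset (Sym2 V)) (v : V) : ℕ :=
  (ET.filter fun e => v ∈ e).card

/-- An edge set is connected (spans a subtree, inside a forest) if any two of its edges are
linked by a chain of pairwise incident edges within the set. -/
def EdgeConnectedSet (ET : Finset (Sym2 V)) : Prop :=
  ∀ e ∈ ET, ∀ f ∈ ET,
    Relation.ReflTransGen (fun a b => a ∈ ET ∧ b ∈ ET ∧ EdgeInc a b) e f

/-- A splitting subtree (given by its nonempty connected edge set `ET`): either a single
edge, or a subtree with fringe interior boundary of size at most 2 whose two interior
boundary edges (if there are two) are non-incident. -/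
def IsSplitting (ET : Finset (Sym2 V)) : Prop :=
  ET ⊆ G.edgeFinset ∧ ET.Nonempty ∧ EdgeConnectedSet ET ∧
  (ET.card = 1 ∨
    ((∀ e ∈ intBd G ET, ∃ v : V, v ∈ e ∧ degT ET v = 1) ∧
     (intBd G ET).card ≤ 2 ∧
     ∀ e ∈ intBd G ET, ∀ f ∈ intBd G ET, e ≠ f → ¬ EdgeInc e f))

end Trees

section TreeBlocks

variable {V : Type} [Fintype V] [DecidableEq V] (G : SimpleGraph V) [DecidableRel G.Adj]

/-- The block of edges hanging from the edge `e0`, relative to a set `R` of root vertices: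
the edges of `ET` reachable from `e0` by chains of incident edges meeting at vertices
outside `R`. -/
noncomputable def hangBlock (ET : Finset (Sym2 V)) (R : Finset V) (e0 : Sym2 V) :
    Finset (Sym2 V) :=
  ET.filter fun f => Relation.ReflTransGen
    (fun a b => a ∈ ET ∧ b ∈ ET ∧ EdgeInc a b ∧ ∃ v : V, v ∈ a ∧ v ∈ b ∧ v ∉ R) e0 f

/-- Vertex-rooted block partition: `T` is rooted at an internal vertex `r0` of `T`, the
distinguished edges `roots i` are exactly the edges of `T` at `r0`, and each block is the
subtree of `T` hanging from its distinguished edge. -/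
def IsVertexRooted (ET : Finset (Sym2 V)) {r : ℕ}
    (blocks : Fin r → Finset (Sym2 V)) (roots : Fin r → Sym2 V) : Prop :=
  ∃ r0 : V, 2 ≤ degT ET r0 ∧ Function.Injective roots ∧
    (∀ i, roots i ∈ ET ∧ r0 ∈ roots i) ∧
    (∀ f ∈ ET, r0 ∈ f → ∃ i, roots i = f) ∧
    (∀ i, blocks i = hangBlock ET {r0} (roots i))

/-- Edge-rooted block partition: `T` is rooted at an edge `e` of `T`, not in the interior
boundary, with both endpoints internal to `T`; the blocks are `{e}` together with the
subtrees hanging from each edge of `T` incident to `e`. -/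
def IsEdgeRooted (ET : Finset (Sym2 V)) {r : ℕ}
    (blocks : Fin r → Finset (Sym2 V)) (roots : Fin r → Sym2 V) : Prop :=
  ∃ e : Sym2 V, e ∈ ET ∧ e ∉ intBd G ET ∧ (∀ v ∈ e, 2 ≤ degT ET v) ∧
    Function.Injective roots ∧
    (∃ i0, roots i0 = e ∧ blocks i0 = {e}) ∧
    (∀ i, roots i = e ∨ (roots i ∈ ET ∧ roots i ≠ e ∧ EdgeInc e (roots i) ∧
      blocks i = hangBlock (ET.erase e) (Finset.univ.filter fun v => v ∈ e) (roots i))) ∧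
    (∀ f ∈ ET, f ≠ e → EdgeInc e f → ∃ i, roots i = f)

/-- The tree block setting: a vertex-rooted or edge-rooted block partition. -/
def TreeBlockSetting (ET : Finset (Sym2 V)) {r : ℕ}
    (blocks : Fin r → Finset (Sym2 V)) (roots : Fin r → Sym2 V) : Prop :=
  IsVertexRooted ET blocks roots ∨ IsEdgeRooted G ET blocks roots

/-- `g_i`: the minimum over boundary conditions `σ ∈ Ω^μ_E` of the spectral gap of the
Glauber dynamics on the block `E_i`. -/
noncomputable def blockGapE (d : ℕ) (ET : Finset (Sym2 V)) (μ : Sym2 V → Fin (d + 1))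
    {r : ℕ} (blocks : Fin r → Finset (Sym2 V)) (i : Fin r) : ℝ :=
  sInf {x : ℝ | ∃ σ : OmegaE G (d + 1) ET μ,
    x = specGap (unif (OmegaE G (d + 1) (blocks i) σ.1)) (treeGen G (d + 1) (blocks i) σ.1)}

/-- `τ_i`: the maximum over boundary conditions `σ ∈ Ω^μ_E` of the relaxation time of the
Glauber dynamics on the block `E_i`. -/
noncomputable def blockTauE (d : ℕ) (ET : Finset (Sym2 V)) (μ : Sym2 V → Fin (d + 1))
    {r : ℕ} (blocks : Fin r → Finset (Sym2 V)) (i : Fin r) : ℝ :=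
  sSup {x : ℝ | ∃ σ : OmegaE G (d + 1) ET μ,
    x = relaxTime (unif (OmegaE G (d + 1) (blocks i) σ.1)) (treeGen G (d + 1) (blocks i) σ.1)}

/-- Restriction of a colouring in `Ω^μ_E` to `F = {e_1, …, e_r}` (the distinguished edges). -/
noncomputable def resE (d : ℕ) (ET : Finset (Sym2 V)) (μ : Sym2 V → Fin (d + 1))
    {r : ℕ} (roots : Fin r → Sym2 V) (σ : OmegaE G (d + 1) ET μ) : Fin r → Fin (d + 1) :=
  fun i => σ.1 (roots i)

/-- The projection `π_𝓡` onto `F` of the uniform distribution on `Ω^μ_E`. -/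
noncomputable def piRE (d : ℕ) (ET : Finset (Sym2 V)) (μ : Sym2 V → Fin (d + 1))
    {r : ℕ} (roots : Fin r → Sym2 V)
    (σh : ↥(Set.range (resE G d ET μ roots))) : ℝ :=
  (Fintype.card {σ : OmegaE G (d + 1) ET μ // resE G d ET μ roots σ = σh.1} : ℝ) /
  (Fintype.card (OmegaE G (d + 1) ET μ) : ℝ)

/-- `π^{i,σ̂}_proj(η̂)`: for an arbitrary extension `σ` of `σ̂`, the probability under the
uniform distribution on `Ω^σ_{E_i}` that the restriction to `F` equals `η̂`. -/
noncomputable def projE (d : ℕ) (ET : Finset (Sym2 V)) (μ : Sym2 V → Fin (d + 1))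
    {r : ℕ} (blocks : Fin r → Finset (Sym2 V)) (roots : Fin r → Sym2 V) (i : Fin r)
    (σh : ↥(Set.range (resE G d ET μ roots))) (ηh : Fin r → Fin (d + 1)) : ℝ :=
  (Fintype.card {ξ : OmegaE G (d + 1) (blocks i)
      (Classical.choose (Set.mem_range.mp σh.2)).1 //
      ∀ j : Fin r, ξ.1 (roots j) = ηh j} : ℝ) /
  (Fintype.card (OmegaE G (d + 1) (blocks i)
      (Classical.choose (Set.mem_range.mp σh.2)).1) : ℝ)

/-- Off-diagonal entries of the reduced block dynamics `𝓡^μ_𝓔`. -/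
noncomputable def redOffE (d : ℕ) (ET : Finset (Sym2 V)) (μ : Sym2 V → Fin (d + 1))
    {r : ℕ} (blocks : Fin r → Finset (Sym2 V)) (roots : Fin r → Sym2 V)
    (σh ηh : ↥(Set.range (resE G d ET μ roots))) : ℝ :=
  ∑ i : Fin r,
    if ∀ j : Fin r, j ≠ i → σh.1 j = ηh.1 j then
      blockGapE G d ET μ blocks i * projE G d ET μ blocks roots i σh ηh.1
    else 0

/-- The reduced block dynamics `𝓡^μ_𝓔` on `Ω_𝓡 = {σ|_F : σ ∈ Ω^μ_E}`. -/
noncomputable def redDynE (d : ℕ) (ET : Finset (Sym2 V)) (μ : Sym2 V → Fin (d + 1))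
    {r : ℕ} (blocks : Fin r → Finset (Sym2 V)) (roots : Fin r → Sym2 V) :
    ↥(Set.range (resE G d ET μ roots)) → ↥(Set.range (resE G d ET μ roots)) → ℝ :=
  fun σh ηh =>
    if σh = ηh then
      -∑ ηh' ∈ Finset.univ.filter fun b => b ≠ σh, redOffE G d ET μ blocks roots σh ηh'
    else redOffE G d ET μ blocks roots σh ηh

end TreeBlocks

section FiniteSets

lemma sum_card_fiberwise_le {α β : Type*} [DecidableEq β] (s : Finset α) (t : Finset β)
    (f : α → β) : ∑ b ∈ t, #{a ∈ s | f a = b} ≤ #s :=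
  (sum_card_fiberwise_eq_card_filter s t f).trans_le (card_filter_le _ _)

lemma exists_eq_pair_of_card_eq_two {α : Type*} [DecidableEq α] {s : Finset α} (hs : #s = 2)
    {a : α} (ha : a ∈ s) : ∃ b, a ≠ b ∧ s = {a, b} := by
  obtain ⟨x, y, hxy, rfl⟩ := card_eq_two.1 hs
  obtain rfl | rfl : a = x ∨ a = y := by simpa using ha
  · exact ⟨y, hxy, rfl⟩
  · exact ⟨x, hxy.symm, pair_comm x a⟩

end FiniteSets

section Incidence

lemma EdgeInc.symm {V : Type} {e f : Sym2 V} (h : EdgeInc e f) : EdgeInc f e :=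
  ⟨h.1.symm, h.2.imp fun _ hv => ⟨hv.2, hv.1⟩⟩

lemma eq_of_degT_eq_one {V : Type} [DecidableEq V] {E : Finset (Sym2 V)} {v : V}
    (h : degT E v = 1) {e f : Sym2 V} (he : e ∈ E) (hve : v ∈ e) (hf : f ∈ E) (hvf : v ∈ f) :
    e = f :=
  card_le_one.1 h.le e (mem_filter.2 ⟨he, hve⟩) f (mem_filter.2 ⟨hf, hvf⟩)

variable {V : Type} [Fintype V] [DecidableEq V] {G : SimpleGraph V} [DecidableRel G.Adj]
  {E : Finset (Sym2 V)} {e f : Sym2 V}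

lemma mem_extBd : f ∈ extBd G E ↔ (f ∈ G.edgeSet ∧ f ∉ E) ∧ ∃ h ∈ E, EdgeInc f h := by
  simp [extBd]

lemma mem_filter_extBd_edgeInc (he : e ∈ E) :
    f ∈ {f ∈ extBd G E | EdgeInc f e} ↔ (f ∈ G.edgeSet ∧ f ∉ E) ∧ EdgeInc f e := by
  rw [mem_filter, mem_extBd]
  exact ⟨fun h => ⟨h.1.1, h.2⟩, fun h => ⟨⟨h.1, e, he, h.2⟩, h.2⟩⟩

lemma mem_intBd : e ∈ intBd G E ↔ e ∈ E ∧ ∃ f, (f ∈ G.edgeSet ∧ f ∉ E) ∧ EdgeInc e f := by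
  rw [intBd, mem_filter]
  refine and_congr_right fun he => exists_congr fun f => ?_
  rw [mem_extBd]
  exact ⟨fun h => ⟨h.1.1, h.2⟩, fun h => ⟨⟨h.1, e, he, h.2.symm⟩, h.2⟩⟩

/-- The set `C` of colours that `χ` blocks for `e`: those of the exterior edges of `E` incident
to `e`. -/
noncomputable def blockedColours (G : SimpleGraph V) [DecidableRel G.Adj] {k : ℕ}
    (E : Finset (Sym2 V)) (χ : Sym2 V → Fin k) (e : Sym2 V) : Finset (Fin k) :=
  ((extBd G E).filter fun f => EdgeInc f e).image χ

lemma mem_blockedColours {k : ℕ} {χ : Sym2 V → Fin k} (he : e ∈ E) {c : Fin k} :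
    c ∈ blockedColours G E χ e ↔
      ∃ f, ((f ∈ G.edgeSet ∧ f ∉ E) ∧ EdgeInc f e) ∧ χ f = c := by
  simp only [blockedColours, mem_image, mem_filter_extBd_edgeInc he]

lemma notMem_blockedColours {k : ℕ} {χ : Sym2 V → Fin k} (he : e ∈ E) (heG : e ∈ G.edgeSet)
    (ξ : OmegaE G k E χ) : ξ.1 e ∉ blockedColours G E χ e := by
  rw [mem_blockedColours he]
  rintro ⟨f, ⟨⟨hfG, hfE⟩, hfe⟩, hc⟩
  exact ξ.2.1 f hfG e heG hfe (ξ.2.2 f hfE ▸ hc)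

end Incidence

section ColourExchange

/-- The function obtained from `ξ` by exchanging the values `a` and `b` on `S`. -/
def swapOn {α β : Type*} [DecidableEq α] [DecidableEq β] (S : Finset α) (a b : β) (ξ : α → β) :
    α → β :=
  fun f => if f ∈ S then Equiv.swap a b (ξ f) else ξ f

lemma swapOn_injective {α β : Type*} [DecidableEq α] [DecidableEq β] (S : Finset α) (a b : β) :
    Function.Injective (swapOn S a b) := by
  refine Function.Involutive.injective fun ξ => funext fun f => ?_
  by_cases hf : f ∈ S <;> simp [swapOn, hf]

lemma ProperECol.swapOn {V : Type} [DecidableEq V] {G : SimpleGraph V} {k : ℕ}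
    {S : Finset (Sym2 V)} {a b : Fin k} {ξ : Sym2 V → Fin k} (hξ : ProperECol G ξ)
    (hS : ∀ f ∈ S, f ∈ G.edgeSet → ∀ h ∉ S, h ∈ G.edgeSet → EdgeInc f h →
      Equiv.swap a b (ξ f) ≠ ξ h) :
    ProperECol G (swapOn S a b ξ) := by
  intro f hf h hh hfh
  by_cases hfS : f ∈ S <;> by_cases hhS : h ∈ S <;>
    simp only [_root_.swapOn, hfS, hhS, if_true, if_false]
  · exact (Equiv.swap a b).injective.ne (hξ f hf h hh hfh)
  · exact hS f hfS hf h hhS hh hfh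
  · exact (hS h hhS hh f hfS hf hfh.symm).symm
  · exact hξ f hf h hh hfh

variable {V : Type} [Fintype V] [DecidableEq V] {G : SimpleGraph V} [DecidableRel G.Adj]
  {E S D : Finset (Sym2 V)} {e : Sym2 V} {k : ℕ} {χ : Sym2 V → Fin k}

/-- `S` is a part of `E` whose only interior boundary edge is `e` and which is cut off from the
rest of `E` by the edges of `D`. Colours not appearing on `D` may be exchanged on `S`. -/
structure IsSide (G : SimpleGraph V) [DecidableRel G.Adj] (E : Finset (Sym2 V)) (e : Sym2 V)
    (D S : Finset (Sym2 V)) : Prop where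
  subset : S ⊆ E
  mem : e ∈ S
  eq_of_mem_intBd : ∀ f ∈ S, f ∈ intBd G E → f = e
  mem_cut : ∀ f ∈ S, ∀ h ∈ E, h ∉ S → EdgeInc f h → h ∈ D

lemma isSide_self (h : intBd G E = {e}) : IsSide G E e ∅ E where
  subset := subset_rfl
  mem := (mem_intBd.1 (h ▸ mem_singleton_self e)).1
  eq_of_mem_intBd _ _ hf := mem_singleton.1 (h ▸ hf)
  mem_cut _ _ _ hE hS := absurd hE hS

lemma IsSide.properECol_swapOn (hS : IsSide G E e D S) (ξ : OmegaE G k E χ) {a b : Fin k}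
    (he : Equiv.swap a b (ξ.1 e) ∉ blockedColours G E χ e)
    (hD : ∀ g ∈ D, ξ.1 g ≠ a ∧ ξ.1 g ≠ b) : ProperECol G (swapOn S a b ξ.1) := by
  refine ξ.2.1.swapOn fun f hfS hfG h hhS hhG hfh hc => ?_
  by_cases hhE : h ∈ E
  · obtain ⟨ha, hb⟩ := hD h (hS.mem_cut f hfS h hhE hhS hfh)
    rw [← Equiv.swap_apply_of_ne_of_ne ha hb] at hc
    exact ξ.2.1 f hfG h hhG hfh ((Equiv.swap a b).injective hc)
  · obtain rfl := hS.eq_of_mem_intBd f hfS (mem_intBd.2 ⟨hS.subset hfS, h, ⟨hhG, hhE⟩, hfh⟩)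
    refine he ((mem_blockedColours (hS.subset hfS)).2 ⟨h, ⟨⟨hhG, hhE⟩, hfh.symm⟩, ?_⟩)
    rw [hc, ξ.2.2 h hhE]

lemma IsSide.exists_eq_swapOn (hS : IsSide G E e D S) (ξ : OmegaE G k E χ) {a b : Fin k}
    (he : Equiv.swap a b (ξ.1 e) ∉ blockedColours G E χ e)
    (hD : ∀ g ∈ D, ξ.1 g ≠ a ∧ ξ.1 g ≠ b) :
    ∃ η : OmegaE G k E χ, η.1 = swapOn S a b ξ.1 := by
  refine ⟨⟨_, hS.properECol_swapOn ξ he hD, fun f hf => ?_⟩, rfl⟩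
  rw [swapOn, if_neg fun hfS => hf (hS.subset hfS), ξ.2.2 f hf]

lemma IsSide.card_le_card (hS : IsSide G E e D S) (a b : Fin k) {P Q : OmegaE G k E χ → Prop}
    [DecidablePred P] [DecidablePred Q]
    (hP : ∀ ξ, P ξ → Equiv.swap a b (ξ.1 e) ∉ blockedColours G E χ e ∧
      ∀ g ∈ D, ξ.1 g ≠ a ∧ ξ.1 g ≠ b)
    (hPQ : ∀ ξ η : OmegaE G k E χ, P ξ → η.1 = swapOn S a b ξ.1 → Q η) :
    #{ξ | P ξ} ≤ #{ξ | Q ξ} := by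
  refine card_le_card_of_forall_subsingleton
    (fun ξ η : OmegaE G k E χ => η.1 = swapOn S a b ξ.1) (fun ξ hξ => ?_) fun η _ ξ hξ ξ' hξ' => ?_
  · have hξ := (mem_filter.1 hξ).2
    obtain ⟨η, hη⟩ := hS.exists_eq_swapOn ξ (hP ξ hξ).1 (hP ξ hξ).2
    exact ⟨η, mem_filter.2 ⟨mem_univ η, hPQ ξ η hξ hη⟩, hη⟩
  · exact Subtype.ext (swapOn_injective S a b (hξ.2.symm.trans hξ'.2))

end ColourExchange

section ColourCounts

lemma card_omegaE_pos {V : Type} [Fintype V] [DecidableEq V] {G : SimpleGraph V}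
    {E : Finset (Sym2 V)} {k : ℕ} {χ : Sym2 V → Fin k} (hχ : ProperECol G χ) :
    0 < Fintype.card (OmegaE G k E χ) :=
  Fintype.card_pos_iff.2 ⟨χ, hχ, fun _ _ => rfl⟩

variable {V : Type} [Fintype V] [DecidableEq V] {G : SimpleGraph V} [DecidableRel G.Adj]
  {E : Finset (Sym2 V)} {e : Sym2 V} {k : ℕ} {χ : Sym2 V → Fin k}

lemma card_omegaE_eq_sum (he : e ∈ E) (heG : e ∈ G.edgeSet) :
    Fintype.card (OmegaE G k E χ) =
      ∑ c ∈ (blockedColours G E χ e)ᶜ, #{ξ : OmegaE G k E χ | ξ.1 e = c} :=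
  card_eq_sum_card_fiberwise fun ξ _ => mem_compl.2 (notMem_blockedColours he heG ξ)

lemma card_colour_eq_of_intBd_eq_singleton (h : intBd G E = {e}) {c c' : Fin k}
    (hc : c ∉ blockedColours G E χ e) (hc' : c' ∉ blockedColours G E χ e) :
    #{ξ : OmegaE G k E χ | ξ.1 e = c} = #{ξ : OmegaE G k E χ | ξ.1 e = c'} := by
  have hS := isSide_self h
  have key {x x' : Fin k} (hx' : x' ∉ blockedColours G E χ e) :
      #{ξ : OmegaE G k E χ | ξ.1 e = x} ≤ #{ξ : OmegaE G k E χ | ξ.1 e = x'} := by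
    refine hS.card_le_card x x' (fun ξ hξ => ⟨by simpa [hξ], by simp⟩) fun ξ η hξ hη => ?_
    simp [hη, swapOn, hS.mem, hξ]
  exact le_antisymm (key hc') (key hc)

theorem colour_proportion_of_intBd_eq_singleton (hχ : ProperECol G χ) (heG : e ∈ G.edgeSet)
    (h : intBd G E = {e}) {c : Fin k} (hc : c ∉ blockedColours G E χ e) :
    (#{ξ : OmegaE G k E χ | ξ.1 e = c} : ℝ) / Fintype.card (OmegaE G k E χ) =
      1 / ((k : ℝ) - #(blockedColours G E χ e)) := by
  have hcard : Fintype.card (OmegaE G k E χ) =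
      (k - #(blockedColours G E χ e)) * #{ξ : OmegaE G k E χ | ξ.1 e = c} := by
    rw [card_omegaE_eq_sum (isSide_self h).mem heG, sum_congr rfl fun z hz =>
      card_colour_eq_of_intBd_eq_singleton h (mem_compl.1 hz) hc, sum_const, smul_eq_mul,
      card_compl, Fintype.card_fin]
  have hpos := hcard ▸ card_omegaE_pos (E := E) hχ
  have hle : #(blockedColours G E χ e) ≤ k := by
    simpa using card_le_univ (blockedColours G E χ e)
  rw [hcard, Nat.cast_mul, Nat.cast_sub hle, one_div, div_mul_cancel_right₀]
  exact_mod_cast (Nat.pos_of_mul_pos_left hpos).ne'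

end ColourCounts

section SeparatingPair

variable {V : Type} [Fintype V] [DecidableEq V] {G : SimpleGraph V} [DecidableRel G.Adj]
  {E S : Finset (Sym2 V)} {e g g₁ g₂ : Sym2 V} {k : ℕ} {χ : Sym2 V → Fin k} {x x' z : Fin k}

lemma IsSide.card_colour_le_add (hS : IsSide G E e {g} S) (heG : e ∈ G.edgeSet)
    (hgG : g ∈ G.edgeSet) (heg : EdgeInc e g) (hx' : x' ∉ blockedColours G E χ e) :
    #{ξ : OmegaE G k E χ | ξ.1 e = x} ≤
      #{ξ : OmegaE G k E χ | ξ.1 e = x ∧ ξ.1 g = x'} + #{ξ : OmegaE G k E χ | ξ.1 e = x'} := by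
  rw [← card_filter_add_card_filter_not (s := {ξ : OmegaE G k E χ | ξ.1 e = x})
    fun ξ => ξ.1 g = x', filter_filter, filter_filter]
  refine Nat.add_le_add_left (hS.card_le_card x x' ?_ ?_) _
  · rintro ξ ⟨rfl, hg⟩
    simpa [hg, hx'] using (ξ.2.1 e heG g hgG heg).symm
  · rintro ξ η ⟨hx, -⟩ hη
    simp [hη, swapOn, hS.mem, hx]

lemma IsSide.card_colour_pair_le_add (hS : IsSide G E e {g₂} S) (hg₁S : g₁ ∈ S)
    (heG : e ∈ G.edgeSet) (hg₁G : g₁ ∈ G.edgeSet) (hg₂G : g₂ ∈ G.edgeSet) (hg : EdgeInc g₁ g₂)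
    (hx' : x ≠ x') (hz : x ≠ z) :
    #{ξ : OmegaE G k E χ | ξ.1 e = x ∧ ξ.1 g₁ = x'} ≤
      #{ξ : OmegaE G k E χ | (ξ.1 e = x ∧ ξ.1 g₁ = x') ∧ ξ.1 g₂ = z} +
        #{ξ : OmegaE G k E χ | ξ.1 e = x ∧ ξ.1 g₁ = z} := by
  rw [← card_filter_add_card_filter_not (s := {ξ : OmegaE G k E χ | ξ.1 e = x ∧ ξ.1 g₁ = x'})
    fun ξ => ξ.1 g₂ = z, filter_filter, filter_filter]
  refine Nat.add_le_add_left (hS.card_le_card x' z ?_ ?_) _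
  · rintro ξ ⟨⟨rfl, rfl⟩, hg₂⟩
    rw [Equiv.swap_apply_of_ne_of_ne hx' hz]
    simpa [hg₂, notMem_blockedColours (hS.subset hS.mem) heG ξ]
      using (ξ.2.1 g₁ hg₁G g₂ hg₂G hg).symm
  · rintro ξ η ⟨⟨hx, hx₁⟩, -⟩ hη
    simp [hη, swapOn, hS.mem, hg₁S, hx, hx₁, Equiv.swap_apply_of_ne_of_ne hx' hz]

/-- `e, g₁, g₂` is the beginning of a path in `E` such that each of `g₁` and `g₂` separates `e`
from the rest of the interior boundary of `E`. -/
structure IsSeparatingPair (G : SimpleGraph V) [DecidableRel G.Adj] (E : Finset (Sym2 V))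
    (e g₁ g₂ : Sym2 V) : Prop where
  mem_left : g₁ ∈ E
  mem_right : g₂ ∈ E
  edgeInc_left : EdgeInc e g₁
  edgeInc_right : EdgeInc g₁ g₂
  exists_left : ∃ S, IsSide G E e {g₁} S
  exists_right : ∃ S, IsSide G E e {g₂} S ∧ g₁ ∈ S

lemma IsSeparatingPair.mem (h : IsSeparatingPair G E e g₁ g₂) : e ∈ E :=
  let ⟨_, hS⟩ := h.exists_left
  hS.subset hS.mem

lemma IsSeparatingPair.mul_card_colour_pair_le (h : IsSeparatingPair G E e g₁ g₂)
    (hE : E ⊆ G.edgeFinset) (hx : x ≠ x') :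
    (k - 2) * #{ξ : OmegaE G k E χ | ξ.1 e = x ∧ ξ.1 g₁ = x'} ≤
      #{ξ : OmegaE G k E χ | ξ.1 e = x} := by
  obtain ⟨S, hS, hg₁S⟩ := h.exists_right
  have hG {f : Sym2 V} (hf : f ∈ E) : f ∈ G.edgeSet := SimpleGraph.mem_edgeFinset.1 (hE hf)
  set F : Finset (OmegaE G k E χ) := {ξ | ξ.1 e = x ∧ ξ.1 g₁ = x'} with hF
  set N : Finset (OmegaE G k E χ) := {ξ | ξ.1 e = x} with hN
  set Z : Finset (Fin k) := {x, x'}ᶜ with hZ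
  have hZcard : #Z = k - 2 := by rw [card_compl, card_pair hx, Fintype.card_fin]
  have hx'Z : x' ∉ Z := by simp [hZ]
  calc (k - 2) * #F = ∑ _z ∈ Z, #F := by rw [sum_const, hZcard, smul_eq_mul]
    _ ≤ ∑ z ∈ Z, (#{ξ ∈ F | ξ.1 g₂ = z} + #{ξ ∈ N | ξ.1 g₁ = z}) := by
      refine sum_le_sum fun z hz => ?_
      rw [hF, hN, filter_filter, filter_filter]
      refine hS.card_colour_pair_le_add hg₁S (hG h.mem) (hG h.mem_left)
        (hG h.mem_right) h.edgeInc_right hx ?_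
      rintro rfl
      simp [hZ] at hz
    _ ≤ #F + ∑ z ∈ Z, #{ξ ∈ N | ξ.1 g₁ = z} := by
      rw [sum_add_distrib]
      exact Nat.add_le_add_right (sum_card_fiberwise_le _ _ _) _
    _ = ∑ z ∈ insert x' Z, #{ξ ∈ N | ξ.1 g₁ = z} := by
      rw [sum_insert hx'Z, hF, hN, filter_filter]
    _ ≤ #N := sum_card_fiberwise_le _ _ _

lemma IsSeparatingPair.mul_card_colour_le (h : IsSeparatingPair G E e g₁ g₂)
    (hE : E ⊆ G.edgeFinset) (hx : x ≠ x') (hx' : x' ∉ blockedColours G E χ e) :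
    (k - 2) * #{ξ : OmegaE G k E χ | ξ.1 e = x} ≤
      #{ξ : OmegaE G k E χ | ξ.1 e = x} + (k - 2) * #{ξ : OmegaE G k E χ | ξ.1 e = x'} := by
  obtain ⟨S, hS⟩ := h.exists_left
  have hG {f : Sym2 V} (hf : f ∈ E) : f ∈ G.edgeSet := SimpleGraph.mem_edgeFinset.1 (hE hf)
  grw [← h.mul_card_colour_pair_le hE hx, ← mul_add, ← hS.card_colour_le_add
    (hG h.mem) (hG h.mem_left) h.edgeInc_left hx']

end SeparatingPair

section Paths

open SimpleGraph

lemma reachable_fromEdgeSet_of_mem {V : Type*} {F : Set (Sym2 V)} {f : Sym2 V} (hf : f ∈ F)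
    {u w : V} (hu : u ∈ f) (hw : w ∈ f) : (fromEdgeSet F).Reachable u w := by
  obtain rfl | huw := eq_or_ne u w
  · rfl
  · obtain rfl : f = s(u, w) := (Sym2.mem_and_mem_iff huw).1 ⟨hu, hw⟩
    exact Adj.reachable ((fromEdgeSet_adj F).2 ⟨hf, huw⟩)

lemma not_reachable_fromEdgeSet_sdiff {V : Type*} {F : Set (Sym2 V)}
    (hF : (fromEdgeSet F).IsAcyclic) {v w : V} {p : (fromEdgeSet F).Walk v w} (hp : p.IsPath)
    {g : Sym2 V} (hg : g ∈ p.edges) : ¬ (fromEdgeSet (F \ {g})).Reachable v w := by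
  intro h
  obtain ⟨q, hq⟩ := h.exists_isPath
  have hle : fromEdgeSet (F \ {g}) ≤ fromEdgeSet F := fromEdgeSet_mono Set.sdiff_subset
  have hpq : p = q.mapLe hle :=
    congrArg Subtype.val ((hF.subsingleton_path v w).elim ⟨p, hp⟩ ⟨q.mapLe hle, hq.mapLe hle⟩)
  rw [hpq, Walk.edges_mapLe_eq_edges] at hg
  have hgF := q.edges_subset_edgeSet hg
  rw [edgeSet_fromEdgeSet] at hgF
  exact hgF.1.2 rfl

variable {V : Type} {E : Finset (Sym2 V)} {e e' f g : Sym2 V} {v v' : V}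

lemma EdgeConnectedSet.reachable (hE : EdgeConnectedSet E) (he : e ∈ E) (he' : e' ∈ E)
    (hv : v ∈ e) : ∀ w ∈ e', (fromEdgeSet (E : Set (Sym2 V))).Reachable v w := by
  induction hE e he e' he' with
  | refl => exact fun w hw => reachable_fromEdgeSet_of_mem he hv hw
  | tail _ hfg ih =>
    obtain ⟨hf, hg, -, u, huf, hug⟩ := hfg
    exact fun w hw => (ih hf u huf).trans (reachable_fromEdgeSet_of_mem hg hug hw)

/-- The edges of `E` on the same side of `g` as the vertex `v`, namely those in the component of `v`
in the graph spanned by `E \ {g}`; the edge `g` lies on neither side. -/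
noncomputable def nearSide (E : Finset (Sym2 V)) (v : V) (g : Sym2 V) : Finset (Sym2 V) :=
  {f ∈ E | f ≠ g ∧ ∃ u ∈ f, (fromEdgeSet ((E : Set (Sym2 V)) \ {g})).Reachable v u}

lemma mem_nearSide :
    f ∈ nearSide E v g ↔
      f ∈ E ∧ f ≠ g ∧ ∃ u ∈ f, (fromEdgeSet ((E : Set (Sym2 V)) \ {g})).Reachable v u := by
  rw [nearSide, mem_filter]

lemma reachable_of_mem_nearSide (hf : f ∈ nearSide E v g) {w : V} (hw : w ∈ f) :
    (fromEdgeSet ((E : Set (Sym2 V)) \ {g})).Reachable v w := by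
  obtain ⟨hfE, hfg, u, hu, hvu⟩ := mem_nearSide.1 hf
  exact hvu.trans
    (reachable_fromEdgeSet_of_mem (F := (E : Set (Sym2 V)) \ {g}) ⟨hfE, hfg⟩ hu hw)

lemma mem_nearSide_of_edgeInc (hf : f ∈ nearSide E v g) {h : Sym2 V} (hh : h ∈ E) (hhg : h ≠ g)
    (hfh : EdgeInc f h) : h ∈ nearSide E v g := by
  obtain ⟨-, w, hwf, hwh⟩ := hfh
  exact mem_nearSide.2 ⟨hh, hhg, w, hwh, reachable_of_mem_nearSide hf hwf⟩

lemma exists_edgeInc_edges_of_isPath [DecidableEq V] (he : e ∈ E) (he' : e' ∈ E)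
    (hne : e ≠ e') (hinc : ¬ EdgeInc e e') (hv : v ∈ e) (hv' : v' ∈ e')
    (hdv : degT E v = 1) (hdv' : degT E v' = 1)
    {p : (fromEdgeSet (E : Set (Sym2 V))).Walk v v'} (hp : p.IsPath) :
    ∃ g₁ ∈ p.edges, ∃ g₂ ∈ p.edges, EdgeInc e g₁ ∧ EdgeInc g₁ g₂ ∧ e ≠ g₂ := by
  have hnodup := hp.isTrail.edges_nodup
  rcases p with _ | @⟨_, w₁, _, h₁, p⟩
  · exact absurd (eq_of_degT_eq_one hdv he hv he' hv') hne
  obtain rfl : e = s(v, w₁) :=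
    eq_of_degT_eq_one hdv he hv ((fromEdgeSet_adj _).1 h₁).1 (Sym2.mem_mk_left v w₁)
  rcases p with _ | @⟨_, w₂, _, h₂, p⟩
  · exact absurd (eq_of_degT_eq_one hdv' he (Sym2.mem_mk_right v v') he' hv') hne
  have hinc₁ : EdgeInc s(v, w₁) s(w₁, w₂) :=
    ⟨by intro h; simp [h] at hnodup, w₁, Sym2.mem_mk_right v w₁, Sym2.mem_mk_left w₁ w₂⟩
  rcases p with _ | @⟨_, w₃, _, h₃, p⟩
  · obtain rfl := eq_of_degT_eq_one hdv' he' hv' ((fromEdgeSet_adj _).1 h₂).1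
      (Sym2.mem_mk_right w₁ v')
    exact absurd hinc₁ hinc
  simp only [Walk.edges_cons, List.nodup_cons, List.mem_cons, not_or] at hnodup
  exact ⟨s(w₁, w₂), by simp, s(w₂, w₃), by simp, hinc₁,
    ⟨hnodup.2.1.1, w₂, Sym2.mem_mk_right w₁ w₂, Sym2.mem_mk_left w₂ w₃⟩, hnodup.1.2.1⟩

variable [Fintype V] [DecidableEq V] {G : SimpleGraph V} [DecidableRel G.Adj]

lemma isSide_nearSide (hE : (fromEdgeSet (E : Set (Sym2 V))).IsAcyclic) (he : e ∈ E)
    (hbd : ∀ f ∈ intBd G E, f = e ∨ f = e') (hv : v ∈ e) (hv' : v' ∈ e')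
    {p : (fromEdgeSet (E : Set (Sym2 V))).Walk v v'} (hp : p.IsPath) (heg : e ≠ g)
    (hg : g ∈ p.edges) : IsSide G E e {g} (nearSide E v g) where
  subset _ hf := (mem_nearSide.1 hf).1
  mem := mem_nearSide.2 ⟨he, heg, v, hv, .rfl⟩
  eq_of_mem_intBd f hf hfbd := (hbd f hfbd).resolve_right fun hfe' =>
    not_reachable_fromEdgeSet_sdiff hE hp hg (reachable_of_mem_nearSide hf (hfe' ▸ hv'))
  mem_cut f hf h hhE hh hfh := mem_singleton.2 <| by
    by_contra hhg
    exact hh (mem_nearSide_of_edgeInc hf hhE hhg hfh)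

lemma exists_isSeparatingPair_of_isAcyclic (hE : (fromEdgeSet (E : Set (Sym2 V))).IsAcyclic)
    (hconn : EdgeConnectedSet E) (he : e ∈ E) (he' : e' ∈ E) (hne : e ≠ e')
    (hinc : ¬ EdgeInc e e') (hbd : ∀ f ∈ intBd G E, f = e ∨ f = e') (hv : v ∈ e) (hv' : v' ∈ e')
    (hdv : degT E v = 1) (hdv' : degT E v' = 1) : ∃ g₁ g₂, IsSeparatingPair G E e g₁ g₂ := by
  obtain ⟨p, hp⟩ := (hconn.reachable he he' hv v' hv').exists_isPath
  obtain ⟨g₁, hg₁, g₂, hg₂, hinc₁, hinc₂, hne₂⟩ :=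
    exists_edgeInc_edges_of_isPath he he' hne hinc hv hv' hdv hdv' hp
  have hpE {g : Sym2 V} (hg : g ∈ p.edges) : g ∈ E := by
    have hgE := p.edges_subset_edgeSet hg
    rw [edgeSet_fromEdgeSet] at hgE
    exact hgE.1
  have hS₁ := isSide_nearSide hE he hbd hv hv' hp hinc₁.1 hg₁
  have hS₂ := isSide_nearSide hE he hbd hv hv' hp hne₂ hg₂
  exact ⟨g₁, g₂, hpE hg₁, hpE hg₂, hinc₁, hinc₂, ⟨_, hS₁⟩, _, hS₂,
    mem_nearSide_of_edgeInc hS₂.mem (hpE hg₁) hinc₂.1 hinc₁⟩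

end Paths

section BlockedColours

lemma ProperECol.injOn_incidenceSet {V : Type} {G : SimpleGraph V} {k : ℕ}
    {χ : Sym2 V → Fin k} (hχ : ProperECol G χ) (v : V) : Set.InjOn χ (G.incidenceSet v) := by
  intro f hf h hh hfh
  by_contra hne
  exact hχ f hf.1 h hh.1 ⟨hne, v, hf.2, hh.2⟩ hfh

variable {V : Type} [Fintype V] [DecidableEq V] {G : SimpleGraph V} [DecidableRel G.Adj]
  {E : Finset (Sym2 V)} {e f g : Sym2 V} {v : V}

/-- An exterior edge at the other endpoint of `e` would also meet `g`, putting `g` in the interior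
boundary. -/
lemma mem_of_edgeInc_of_degT_eq_one (he : e ∈ E) (hv : v ∈ e) (hdv : degT E v = 1) (hg : g ∈ E)
    (heg : EdgeInc e g) (hgbd : g ∉ intBd G E) (hfG : f ∈ G.edgeSet) (hfE : f ∉ E)
    (hfe : EdgeInc f e) : v ∈ f := by
  obtain ⟨-, u, huf, hue⟩ := hfe
  obtain ⟨hne, w, hwe, hwg⟩ := heg
  by_contra hvf
  have huv : u ≠ v := fun h => hvf (h ▸ huf)
  have hwv : w ≠ v := fun h => hne (eq_of_degT_eq_one hdv he hv hg (h ▸ hwg))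
  obtain rfl : e = s(u, v) := (Sym2.mem_and_mem_iff huv).1 ⟨hue, hv⟩
  obtain rfl : w = u := (Sym2.mem_iff.1 hwe).resolve_right hwv
  exact hgbd (mem_intBd.2 ⟨hg, f, ⟨hfG, hfE⟩, fun h => hfE (h ▸ hg), w, hwg, huf⟩)

lemma filter_extBd_edgeInc_eq_erase (he : e ∈ E) (hv : v ∈ e) (hdv : degT E v = 1)
    (hext : ∀ f ∈ G.edgeSet, f ∉ E → EdgeInc f e → v ∈ f) :
    {f ∈ extBd G E | EdgeInc f e} = (G.incidenceFinset v).erase e := by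
  ext f
  rw [mem_filter_extBd_edgeInc he, mem_erase, SimpleGraph.mem_incidenceFinset]
  constructor
  · rintro ⟨⟨hfG, hfE⟩, hfe⟩
    exact ⟨hfe.1, hfG, hext f hfG hfE hfe⟩
  · rintro ⟨hfe, hfG, hvf⟩
    exact ⟨⟨hfG, fun hfE => hfe (eq_of_degT_eq_one hdv hfE hvf he hv)⟩, hfe, v, hvf, hv⟩

lemma card_blockedColours_eq_degree_sub_one {k : ℕ} {χ : Sym2 V → Fin k} (hχ : ProperECol G χ)
    (he : e ∈ E) (heG : e ∈ G.edgeSet) (hv : v ∈ e) (hdv : degT E v = 1)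
    (hext : ∀ f ∈ G.edgeSet, f ∉ E → EdgeInc f e → v ∈ f) :
    #(blockedColours G E χ e) = G.degree v - 1 := by
  have hmem : e ∈ G.incidenceFinset v := (G.mem_incidenceFinset v e).2 ⟨heG, hv⟩
  rw [blockedColours, filter_extBd_edgeInc_eq_erase he hv hdv hext, card_image_of_injOn,
    card_erase_of_mem hmem, G.card_incidenceFinset_eq_degree]
  refine (hχ.injOn_incidenceSet v).mono fun f hf => ?_
  simpa using mem_of_mem_erase hf

lemma two_le_degree_of_mem_intBd (he : e ∈ intBd G E) (heG : e ∈ G.edgeSet) (hv : v ∈ e)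
    (hext : ∀ f ∈ G.edgeSet, f ∉ E → EdgeInc f e → v ∈ f) : 2 ≤ G.degree v := by
  obtain ⟨-, f, ⟨hfG, hfE⟩, hef⟩ := mem_intBd.1 he
  rw [← G.card_incidenceFinset_eq_degree]
  exact one_lt_card.2 ⟨e, (G.mem_incidenceFinset v e).2 ⟨heG, hv⟩, f,
    (G.mem_incidenceFinset v f).2 ⟨hfG, hext f hfG hfE hef.symm⟩, hef.1⟩

end BlockedColours

section ColourProportions

lemma abs_div_add_sub_half_le_one_div {d N N' : ℝ} (hd : 0 < d) (hN : 0 ≤ N) (hN' : 0 ≤ N')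
    (hpos : 0 < N + N') (h : (d - 1) * N ≤ N + (d - 1) * N')
    (h' : (d - 1) * N' ≤ N' + (d - 1) * N) : |N / (N + N') - 1 / 2| ≤ 1 / d := by
  have habs : |N - N'| * d ≤ 2 * (N + N') := by
    rcases abs_cases (N - N') with ⟨h_abs, -⟩ | ⟨h_abs, -⟩ <;> rw [h_abs] <;> linarith
  have hsub : N / (N + N') - 1 / 2 = (N - N') / (2 * (N + N')) := by
    field_simp
    ring
  rw [hsub, abs_div, abs_of_pos (mul_pos two_pos hpos), div_le_div_iff₀ (by positivity) hd]
  simpa using habs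

variable {V : Type} [Fintype V] [DecidableEq V] {G : SimpleGraph V} [DecidableRel G.Adj]
  {E : Finset (Sym2 V)} {e : Sym2 V}

theorem IsSeparatingPair.abs_colour_proportion_sub_half_le {d : ℕ}
    {χ : Sym2 V → Fin (d + 1)} {c : Fin (d + 1)} {g₁ g₂ : Sym2 V}
    (hpair : IsSeparatingPair G E e g₁ g₂) (hd : 0 < d) (hχ : ProperECol G χ)
    (hE : E ⊆ G.edgeFinset) (hcard : #(blockedColours G E χ e) = d - 1)
    (hc : c ∉ blockedColours G E χ e) :
    |(#{ξ : OmegaE G (d + 1) E χ | ξ.1 e = c} : ℝ) / Fintype.card (OmegaE G (d + 1) E χ) - 1 / 2|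
      ≤ 1 / d := by
  have hcompl : #(blockedColours G E χ e)ᶜ = 2 := by
    rw [card_compl, hcard, Fintype.card_fin]
    omega
  obtain ⟨c', hcc', hpair_eq⟩ := exists_eq_pair_of_card_eq_two hcompl (mem_compl.2 hc)
  have hc' : c' ∉ blockedColours G E χ e := by simp [← mem_compl, hpair_eq]
  have hle {x x' : Fin (d + 1)} (hx : x ≠ x') (hx' : x' ∉ blockedColours G E χ e) :
      ((d : ℝ) - 1) * #{ξ : OmegaE G (d + 1) E χ | ξ.1 e = x} ≤
        #{ξ : OmegaE G (d + 1) E χ | ξ.1 e = x} +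
          ((d : ℝ) - 1) * #{ξ : OmegaE G (d + 1) E χ | ξ.1 e = x'} := by
    rw [← Nat.cast_pred hd]
    exact_mod_cast hpair.mul_card_colour_le hE hx hx'
  have htotal := card_omegaE_eq_sum (χ := χ) hpair.mem
    (SimpleGraph.mem_edgeFinset.1 (hE hpair.mem))
  rw [hpair_eq, sum_pair hcc'] at htotal
  have hpos := htotal ▸ card_omegaE_pos (E := E) hχ
  rw [htotal, Nat.cast_add]
  exact abs_div_add_sub_half_le_one_div (by exact_mod_cast hd) (Nat.cast_nonneg _)
    (Nat.cast_nonneg _) (by exact_mod_cast hpos) (hle hcc' hc') (hle hcc'.symm hc)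

lemma IsSplitting.fringe_of_card_intBd_eq_two (hE : IsSplitting G E) (hcard : #(intBd G E) = 2) :
    (∀ e ∈ intBd G E, ∃ v ∈ e, degT E v = 1) ∧
      ∀ e ∈ intBd G E, ∀ f ∈ intBd G E, e ≠ f → ¬ EdgeInc e f := by
  have hle : #(intBd G E) ≤ #E := card_filter_le _ _
  obtain ⟨hfringe, -, hinc⟩ := hE.2.2.2.resolve_left (by omega)
  exact ⟨hfringe, hinc⟩

lemma IsSplitting.exists_isSeparatingPair (hG : G.IsAcyclic) (hE : IsSplitting G E)
    (hcard : #(intBd G E) = 2) (he : e ∈ intBd G E) : ∃ g₁ g₂, IsSeparatingPair G E e g₁ g₂ := by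
  obtain ⟨hfringe, hinc⟩ := hE.fringe_of_card_intBd_eq_two hcard
  obtain ⟨e', hne, hbd⟩ := exists_eq_pair_of_card_eq_two hcard he
  have he' : e' ∈ intBd G E := by simp [hbd]
  obtain ⟨v, hv, hdv⟩ := hfringe e he
  obtain ⟨v', hv', hdv'⟩ := hfringe e' he'
  have hacyclic : (SimpleGraph.fromEdgeSet (E : Set (Sym2 V))).IsAcyclic :=
    hG.anti ((SimpleGraph.fromEdgeSet_le G).2 fun f hf => SimpleGraph.mem_edgeFinset.1 (hE.1 hf.1))
  exact exists_isSeparatingPair_of_isAcyclic hacyclic hE.2.2.1 (mem_intBd.1 he).1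
    (mem_intBd.1 he').1 hne (hinc e he e' he' hne) (fun f hf => by simpa [hbd] using hf)
    hv hv' hdv hdv'

lemma IsSplitting.exists_card_blockedColours_eq_degree_sub_one (hE : IsSplitting G E)
    (hcard : #(intBd G E) = 2) (he : e ∈ intBd G E) {g : Sym2 V} (hg : g ∈ E) (heg : EdgeInc e g)
    {k : ℕ} {χ : Sym2 V → Fin k} (hχ : ProperECol G χ) :
    ∃ v, 2 ≤ G.degree v ∧ #(blockedColours G E χ e) = G.degree v - 1 := by
  obtain ⟨hfringe, hinc⟩ := hE.fringe_of_card_intBd_eq_two hcard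
  obtain ⟨v, hv, hdv⟩ := hfringe e he
  have heE := (mem_intBd.1 he).1
  have heG := SimpleGraph.mem_edgeFinset.1 (hE.1 heE)
  have hgbd : g ∉ intBd G E := fun hgbd => hinc e he g hgbd heg.1 heg
  have hext : ∀ f ∈ G.edgeSet, f ∉ E → EdgeInc f e → v ∈ f := fun f =>
    mem_of_edgeInc_of_degT_eq_one heE hv hdv hg heg hgbd
  exact ⟨v, two_le_degree_of_mem_intBd he heG hv hext,
    card_blockedColours_eq_degree_sub_one hχ heE heG hv hdv hext⟩

theorem IsSplitting.abs_colour_proportion_sub_half_le {d : ℕ} (hG : G.IsAcyclic)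
    (hdeg : ∀ v, 2 ≤ G.degree v → G.degree v = d) (hE : IsSplitting G E)
    (hcard : #(intBd G E) = 2) (he : e ∈ intBd G E) {χ : Sym2 V → Fin (d + 1)}
    (hχ : ProperECol G χ) {c : Fin (d + 1)} (hc : c ∉ blockedColours G E χ e) :
    |(#{ξ : OmegaE G (d + 1) E χ | ξ.1 e = c} : ℝ) / Fintype.card (OmegaE G (d + 1) E χ) - 1 / 2|
      ≤ 1 / d := by
  obtain ⟨g₁, g₂, hpair⟩ := hE.exists_isSeparatingPair hG hcard he
  obtain ⟨v, hv, hblocked⟩ :=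
    hE.exists_card_blockedColours_eq_degree_sub_one hcard he hpair.mem_left hpair.edgeInc_left hχ
  obtain rfl := hdeg v hv
  exact hpair.abs_colour_proportion_sub_half_le (by omega) hχ hE.1 hblocked hc

end ColourProportions

theorem tree_block_colour_proportions_general {V : Type} [Fintype V] [DecidableEq V]
    {G : SimpleGraph V} [DecidableRel G.Adj] {d : ℕ} (hG : G.IsAcyclic)
    (hdeg : ∀ v, 2 ≤ G.degree v → G.degree v = d) {E : Finset (Sym2 V)} (hE : IsSplitting G E)
    {χ : Sym2 V → Fin (d + 1)} (hχ : ProperECol G χ) {e : Sym2 V} (he : e ∈ intBd G E) :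
    (#(intBd G E) = 2 → ∀ c, c ∉ blockedColours G E χ e →
      |(Fintype.card {ξ : OmegaE G (d + 1) E χ // ξ.1 e = c} : ℝ) /
        Fintype.card (OmegaE G (d + 1) E χ) - 1 / 2| ≤ 1 / d) ∧
    (intBd G E = {e} → ∀ c c', c ∉ blockedColours G E χ e → c' ∉ blockedColours G E χ e →
      Fintype.card {ξ : OmegaE G (d + 1) E χ // ξ.1 e = c} =
        Fintype.card {ξ : OmegaE G (d + 1) E χ // ξ.1 e = c'} ∧
      (Fintype.card {ξ : OmegaE G (d + 1) E χ // ξ.1 e = c} : ℝ) /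
        Fintype.card (OmegaE G (d + 1) E χ) = 1 / ((d : ℝ) + 1 - #(blockedColours G E χ e))) := by
  simp only [Fintype.card_subtype (fun ξ : OmegaE G (d + 1) E χ => ξ.1 e = _)]
  refine ⟨fun hcard c hc => hE.abs_colour_proportion_sub_half_le hG hdeg hcard he hχ hc,
    fun hbd c c' hc hc' => ⟨card_colour_eq_of_intBd_eq_singleton hbd hc hc', ?_⟩⟩
  have heG := SimpleGraph.mem_edgeFinset.1 (hE.1 (mem_intBd.1 he).1)
  simpa using colour_proportion_of_intBd_eq_singleton hχ heG hbd hc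

/-- in the tree block setting, assuming (A1) and (A2), for an interior
boundary edge `e` of a block `T_i` and a boundary condition `σ ∈ Ω^μ_E`, with
`C = σ(N(e) ∩ ∂T_i)`: (1) there is a universal constant `C₀ > 0` such that if
`|∂̄T_i| = 2` then each available colour for `e` has probability within `C₀/d` of `1/2`
under the uniform distribution on `Ω^σ_{E_i}`; (2) if `∂̄T_i = {e}` then all available
colours for `e` are equinumerous among `Ω^σ_{E_i}`, each of probability exactly
`1/(k − |C|)`. -/
theorem tree_block_colour_proportions :
    ∃ C0 : ℝ, 0 < C0 ∧
      ∀ (V : Type) [Fintype V] [DecidableEq V] (G : SimpleGraph V) [DecidableRel G.Adj]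
        (d : ℕ), 3 ≤ d → G.IsTree → (∀ v : V, 2 ≤ G.degree v → G.degree v = d) →
      ∀ ET : Finset (Sym2 V), IsSplitting G ET → 2 ≤ ET.card →
      ∀ μ : Sym2 V → Fin (d + 1), ProperECol G μ →
      ∀ (r : ℕ) (blocks : Fin r → Finset (Sym2 V)) (roots : Fin r → Sym2 V),
        TreeBlockSetting G ET blocks roots →
        (∀ i, IsSplitting G (blocks i)) →
        (∀ (i : Fin r) (σ : OmegaE G (d + 1) ET μ),
          IsErgodicGen (treeGen G (d + 1) (blocks i) σ.1)) →
      ∀ (i : Fin r) (e : Sym2 V), e ∈ intBd G (blocks i) →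
      ∀ σ : OmegaE G (d + 1) ET μ,
        (((intBd G (blocks i)).card = 2 →
          ∀ c : Fin (d + 1),
            c ∉ ((extBd G (blocks i)).filter fun f => EdgeInc f e).image σ.1 →
            |(Fintype.card {ξ : OmegaE G (d + 1) (blocks i) σ.1 // ξ.1 e = c} : ℝ) /
                (Fintype.card (OmegaE G (d + 1) (blocks i) σ.1) : ℝ) - 1 / 2| ≤ C0 / d) ∧
        (intBd G (blocks i) = {e} →
          ∀ c c' : Fin (d + 1),
            c ∉ ((extBd G (blocks i)).filter fun f => EdgeInc f e).image σ.1 →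
            c' ∉ ((extBd G (blocks i)).filter fun f => EdgeInc f e).image σ.1 →
            Fintype.card {ξ : OmegaE G (d + 1) (blocks i) σ.1 // ξ.1 e = c} =
              Fintype.card {ξ : OmegaE G (d + 1) (blocks i) σ.1 // ξ.1 e = c'} ∧
            (Fintype.card {ξ : OmegaE G (d + 1) (blocks i) σ.1 // ξ.1 e = c} : ℝ) /
                (Fintype.card (OmegaE G (d + 1) (blocks i) σ.1) : ℝ) =
              1 / (((d : ℝ) + 1) -
                (((extBd G (blocks i)).filter fun f => EdgeInc f e).image σ.1).card))) := by
  exact ⟨1, one_pos, fun V _ _ G _ d _ hG hdeg _ _ _ _ _ _ _ _ _ hsplit _ i _ he σ =>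
    tree_block_colour_proportions_general hG.isAcyclic hdeg (hsplit i) σ.2.1 he⟩
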